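/- Let 0<s<1 and let ω satisfy (h). Then for every α≥0 there exists a probability measure on ℝ² minimizing E_α among all probability measures on ℝ². Moreover, there exists R>0 depending only on s (independent of α and ω) such that for every α≥0, every minimizer ρ of E_α with zero center of mass ∫x dρ(x)=0 satisfies supp ρ ⊆ {x∈ℝ² : |x|≤R}. -/

import Mathlib

/-!
The kernel `W` is even, continuous into `[0,∞]` (it tends to `∞` at the origin because `Ω ≥ 1`)
and bounded below by `|x|²`. The uniform measure on a vertical unit segment only sees
`Ω(±π/2) = 1`, and `|t|^{-s}` is integrable as `s < 1`, so the infimum of `∬ W` is at most a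
finite constant `segBound s` (`dbl_segM_le`, `segBound_ne_top`).

Existence is the direct method. If `∬ W dμ dμ ≤ C`, some point `z` has `∫ |z-y|² dμ(y) ≤ C`, so
the image of `μ` under `y ↦ z - y`, which has the same energy, has second moment at most `C`
(`exists_translate`). Such measures form a weakly compact set by Prokhorov (`isCompact_moment`),
on which the energy is lower semicontinuous (`dbl_lsc`).

For the support, put `I = ∬ W dρ dρ`. The Euler–Lagrange condition (`potential_le`) says that
`∫ W(x-y) dρ(y) ≤ I` for `ρ`-almost every `x`. When `ρ` is centred,
`|x|² ≤ ∫ |x-y|² dρ(y) ≤ ∫ W(x-y) dρ(y) ≤ I ≤ segBound s` for almost every `x`, which confines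
the support to a ball whose radius depends on `s` only.
-/

open MeasureTheory Real Filter Set Topology
open scoped ENNReal

noncomputable section

namespace Aniso

/-- The Euclidean norm on `ℝ × ℝ`. -/
def nrm (x : ℝ × ℝ) : ℝ := Real.sqrt (x.1 ^ 2 + x.2 ^ 2)

/-- The angle `θ(x) ∈ [-π, π)` of a nonzero point `x ∈ ℝ²`,
so that `x / |x| = (cos (ang x), sin (ang x))`. -/
def ang (x : ℝ × ℝ) : ℝ :=
  if Complex.arg ⟨x.1, x.2⟩ = π then -π else Complex.arg ⟨x.1, x.2⟩

/-- The unit vector `e_φ = (cos φ, sin φ)`. -/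
def eVec (φ : ℝ) : ℝ × ℝ := (Real.cos φ, Real.sin φ)

/-- The constant `τ_s = (2π)^{-s} Γ(s) cos(sπ/2)`. -/
def tauC (s : ℝ) : ℝ := (2 * π) ^ (-s) * Real.Gamma s * Real.cos (s * π / 2)

/-- The constant `c_s = π^{s-1} Γ((2-s)/2) / Γ(s/2)`. -/
def cC (s : ℝ) : ℝ := π ^ (s - 1) * Real.Gamma ((2 - s) / 2) / Real.Gamma (s / 2)

/-- Hypothesis (H): `Ω` is smooth, 2π-periodic, strictly positive and π-periodic. -/
def SatisfiesH (Ω : ℝ → ℝ) : Prop :=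
  ContDiff ℝ (⊤ : ℕ∞) Ω ∧ (∀ θ, Ω (θ + 2 * π) = Ω θ) ∧ (∀ θ, 0 < Ω θ) ∧ ∀ θ, Ω (θ + π) = Ω θ

/-- Hypothesis (h): `ω` is smooth, 2π-periodic, nonnegative, not identically zero,
π-periodic, and `ω(π/2) = 0`. -/
def Satisfiesh (ω : ℝ → ℝ) : Prop :=
  ContDiff ℝ (⊤ : ℕ∞) ω ∧ (∀ θ, ω (θ + 2 * π) = ω θ) ∧ (∀ θ, 0 ≤ ω θ) ∧ (∃ θ, ω θ ≠ 0) ∧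
    (∀ θ, ω (θ + π) = ω θ) ∧ ω (π / 2) = 0

/-- The transformed angle function `Ω̃`. -/
def Omt (s : ℝ) (Ω : ℝ → ℝ) (φ : ℝ) : ℝ :=
  tauC (2 - s) * (∫ θ in (-π)..π, |Real.cos (φ - θ)| ^ (-2 + s) * (Ω θ - Ω (φ + π / 2)))
    + cC s * Ω (φ + π / 2)

/-- The interaction potential `W(x) = |x|^{-s} Ω(θ(x)) + |x|²` as an `[0,∞]`-valued
kernel, with `W(0) = ∞`. -/
def Wkernel (s : ℝ) (Ω : ℝ → ℝ) (x : ℝ × ℝ) : ℝ≥0∞ :=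
  if x = 0 then ⊤ else ENNReal.ofReal (nrm x ^ (-s) * Ω (ang x) + nrm x ^ 2)

/-- The interaction energy `E[ρ] = (1/2) ∬ W(x-y) dρ(y) dρ(x) ∈ [0,∞]`. -/
def energy (s : ℝ) (Ω : ℝ → ℝ) (ρ : Measure (ℝ × ℝ)) : ℝ≥0∞ :=
  (1 / 2 : ℝ≥0∞) * ∫⁻ x, ∫⁻ y, Wkernel s Ω (x - y) ∂ρ ∂ρ

/-- The real-valued interaction potential (with junk value `0` at the origin,
which is Lebesgue negligible). -/
def Wr (s : ℝ) (Ω : ℝ → ℝ) (x : ℝ × ℝ) : ℝ := nrm x ^ (-s) * Ω (ang x) + nrm x ^ 2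

/-- `ρ` minimizes the energy `E` among probability measures on `ℝ²`. -/
def IsMinimizer (E : Measure (ℝ × ℝ) → ℝ≥0∞) (ρ : Measure (ℝ × ℝ)) : Prop :=
  IsProbabilityMeasure ρ ∧ ∀ μ : Measure (ℝ × ℝ), IsProbabilityMeasure μ → E ρ ≤ E μ

/-- `ρ` is the unique minimizer of `E` up to translation: it is a minimizer and every
minimizer is a translate of it. -/
def IsUniqueMinimizer (E : Measure (ℝ × ℝ) → ℝ≥0∞) (ρ : Measure (ℝ × ℝ)) : Prop :=
  IsMinimizer E ρ ∧ ∀ μ, IsMinimizer E μ → ∃ v : ℝ × ℝ, μ = Measure.map (fun x => x + v) ρ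

def R2 (s : ℝ) : ℝ := (8 * Real.sin (s * π / 2) / (s ^ 2 * (2 + s) * π)) ^ (-(1 / (s + 2)))

def C2 (s : ℝ) : ℝ := 4 * Real.sin (s * π / 2) / (s ^ 2 * π ^ 2)

/-- The density `ρ₂(x) = C₂ (R₂² - |x|²)₊^{s/2}`. -/
def rho2 (s : ℝ) (x : ℝ × ℝ) : ℝ := C2 s * (max (R2 s ^ 2 - nrm x ^ 2) 0) ^ (s / 2)

def rho2meas (s : ℝ) : Measure (ℝ × ℝ) := volume.withDensity fun x => ENNReal.ofReal (rho2 s x)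

/-- Counterclockwise rotation of `ℝ²` by the angle `η`. -/
def Rot (η : ℝ) (x : ℝ × ℝ) : ℝ × ℝ :=
  (x.1 * Real.cos η - x.2 * Real.sin η, x.1 * Real.sin η + x.2 * Real.cos η)

/-- The measure `ρ_{a,b,η}`: the pushforward of `ρ₂(x) dx` under `x ↦ R_η (a x₁, b x₂)`. -/
def rhoE (s a b η : ℝ) : Measure (ℝ × ℝ) :=
  Measure.map (fun x => Rot η (a * x.1, b * x.2)) (rho2meas s)

/-- The measure `ρ_{a,b} = ρ_{a,b,0}`. -/
def rhoAB (s a b : ℝ) : Measure (ℝ × ℝ) := rhoE s a b 0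

/-- The Beta function. -/
def BetaR (x y : ℝ) : ℝ := Real.Gamma x * Real.Gamma y / Real.Gamma (x + y)

def C1 (s : ℝ) : ℝ := 2 * Real.cos (s * π / 2) / (s * (s + 1) * π)

def R1 (s : ℝ) : ℝ := (C1 s * BetaR (1 / 2) ((3 + s) / 2)) ^ (-(1 / (s + 2)))

/-- The density `ρ₁(t) = C₁ (R₁² - t²)₊^{(1+s)/2}` on `ℝ`. -/
def rho1 (s t : ℝ) : ℝ := C1 s * (max (R1 s ^ 2 - t ^ 2) 0) ^ ((1 + s) / 2)

def rho1meas (s : ℝ) : Measure ℝ := volume.withDensity fun t => ENNReal.ofReal (rho1 s t)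

/-- The measure `ρ_{1D}`: the pushforward of `ρ₁(t) dt` under `t ↦ (0, t)`. -/
def rho1D (s : ℝ) : Measure (ℝ × ℝ) := Measure.map (fun t : ℝ => ((0 : ℝ), t)) (rho1meas s)

/-- The support of a measure: points all of whose neighborhoods have positive measure. -/
def msupport {α : Type*} [TopologicalSpace α] [MeasurableSpace α] (μ : Measure α) : Set α :=
  {x | ∀ U ∈ 𝓝 x, 0 < μ U}

def Acoef (s : ℝ) (Ω : ℝ → ℝ) (a b : ℝ) : ℝ :=
  tauC s * (R1 s / R2 s) ^ (2 + s) *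
    ∫ φ in (-π)..π,
      (a ^ 2 * Real.cos φ ^ 2 + b ^ 2 * Real.sin φ ^ 2) ^ (-(2 + s) / 2) *
        Real.cos φ ^ 2 * Omt s Ω φ

def Bcoef (s : ℝ) (Ω : ℝ → ℝ) (a b : ℝ) : ℝ :=
  tauC s * (R1 s / R2 s) ^ (2 + s) *
    ∫ φ in (-π)..π,
      (a ^ 2 * Real.cos φ ^ 2 + b ^ 2 * Real.sin φ ^ 2) ^ (-(2 + s) / 2) *
        Real.sin φ ^ 2 * Omt s Ω φ

def Dcoef (s : ℝ) (Ω : ℝ → ℝ) (a b : ℝ) : ℝ :=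
  tauC s * (R1 s / R2 s) ^ (2 + s) *
    ∫ φ in (-π)..π,
      (a ^ 2 * Real.cos φ ^ 2 + b ^ 2 * Real.sin φ ^ 2) ^ (-(2 + s) / 2) *
        (Real.cos φ * Real.sin φ) * Omt s Ω φ

def Mfun (s : ℝ) (Ω : ℝ → ℝ) (a b : ℝ) : ℝ :=
  tauC s * (R1 s / R2 s) ^ (2 + s) *
    ∫ φ in (-π)..π, (a ^ 2 * Real.cos φ ^ 2 + b ^ 2 * Real.sin φ ^ 2) ^ (-s / 2) * Omt s Ω φ

def calE (s : ℝ) (Ω : ℝ → ℝ) (a b : ℝ) : ℝ := Mfun s Ω a b + s / 2 * (a ^ 2 + b ^ 2)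

/-- A measure has compact support. -/
def HasCompactSupportM (ρ : Measure (ℝ × ℝ)) : Prop :=
  ∃ K : Set (ℝ × ℝ), IsCompact K ∧ ρ Kᶜ = 0

/-- The linear interpolation `(1-t) ρ₀ + t ρ₁`. -/
def mix (ρ₀ ρ₁ : Measure (ℝ × ℝ)) (t : ℝ) : Measure (ℝ × ℝ) :=
  ENNReal.ofReal (1 - t) • ρ₀ + ENNReal.ofReal t • ρ₁

/-- Linear interpolation convexity (LIC): for any two distinct compactly supported
probability measures of finite energy with the same center of mass, the energy is
strictly convex along their linear interpolation. -/
def LIC (s : ℝ) (Ω : ℝ → ℝ) : Prop :=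
  ∀ ρ₀ ρ₁ : Measure (ℝ × ℝ), IsProbabilityMeasure ρ₀ → IsProbabilityMeasure ρ₁ →
    HasCompactSupportM ρ₀ → HasCompactSupportM ρ₁ →
    energy s Ω ρ₀ < ⊤ → energy s Ω ρ₁ < ⊤ → ρ₀ ≠ ρ₁ →
    (∫ x, x ∂ρ₀) = (∫ x, x ∂ρ₁) →
    StrictConvexOn ℝ (Set.Icc (0 : ℝ) 1) fun t => (energy s Ω (mix ρ₀ ρ₁ t)).toReal

/-- The interaction energy of a bounded compactly supported signed density. -/
def energyR (s : ℝ) (Ω : ℝ → ℝ) (μ : ℝ × ℝ → ℝ) : ℝ :=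
  (1 / 2) * ∫ x : ℝ × ℝ, (∫ y : ℝ × ℝ, Wr s Ω (x - y) * μ y) * μ x

/-- The logarithmic potential `W_log(x) = -ln|x| + Ω(θ(x)) + |x|²` (real valued,
with junk value at the origin). -/
def Wlog (Ω : ℝ → ℝ) (x : ℝ × ℝ) : ℝ := -Real.log (nrm x) + Ω (ang x) + nrm x ^ 2

def WlogKernel (Ω : ℝ → ℝ) (x : ℝ × ℝ) : ℝ≥0∞ :=
  if x = 0 then ⊤ else ENNReal.ofReal (Wlog Ω x)

/-- The logarithmic interaction energy. -/
def energyLog (Ω : ℝ → ℝ) (ρ : Measure (ℝ × ℝ)) : ℝ≥0∞ :=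
  (1 / 2 : ℝ≥0∞) * ∫⁻ x, ∫⁻ y, WlogKernel Ω (x - y) ∂ρ ∂ρ

/-- The family `W_{(s)}(x) = |x|^{-s} (1/s + Ω(θ(x))) - 1/s + |x|²`. -/
def Wsfam (s : ℝ) (Ω : ℝ → ℝ) (x : ℝ × ℝ) : ℝ :=
  nrm x ^ (-s) * (1 / s + Ω (ang x)) - 1 / s + nrm x ^ 2

/-- The transformed angle function of `W_{(s)}`. -/
def Omts (s : ℝ) (Ω : ℝ → ℝ) (φ : ℝ) : ℝ :=
  tauC (2 - s) * (∫ θ in (-π)..π, |Real.cos (φ - θ)| ^ (-2 + s) * (Ω θ - Ω (φ + π / 2)))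
    + cC s * (1 / s + Ω (φ + π / 2))

/-- The truncated integral appearing in the principal value defining `Ω̃_log`. -/
def pvInt (Ω : ℝ → ℝ) (φ δ : ℝ) : ℝ :=
  ∫ θ in {θ : ℝ | θ ∈ Set.Icc (-π) π ∧ δ ≤ |Real.cos (φ - θ)|},
    |Real.cos (φ - θ)| ^ (-(2 : ℝ)) * (Ω θ - Ω (φ + π / 2))

def OmtLogFam (Ω : ℝ → ℝ) (φ δ : ℝ) : ℝ :=
  -((2 * π) ^ (-(2 : ℝ))) * pvInt Ω φ δ + (2 * π)⁻¹

/-- The transformed angle function `Ω̃_log`, defined as the principal value limit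
(via `limUnder`, which returns the limit whenever it exists). -/
def OmtLog (Ω : ℝ → ℝ) (φ : ℝ) : ℝ := limUnder (𝓝[>] (0 : ℝ)) (OmtLogFam Ω φ)

/-- The closed elliptical region `B(0; a, b)`. -/
def ellipseSet (a b : ℝ) : Set (ℝ × ℝ) := {x | x.1 ^ 2 / a ^ 2 + x.2 ^ 2 / b ^ 2 ≤ 1}

def ALog (Ω : ℝ → ℝ) (a b : ℝ) : ℝ :=
  ∫ φ in (-π)..π,
    (a ^ 2 * Real.cos φ ^ 2 + b ^ 2 * Real.sin φ ^ 2)⁻¹ * Real.cos φ ^ 2 * OmtLog Ω φ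

def BLog (Ω : ℝ → ℝ) (a b : ℝ) : ℝ :=
  ∫ φ in (-π)..π,
    (a ^ 2 * Real.cos φ ^ 2 + b ^ 2 * Real.sin φ ^ 2)⁻¹ * Real.sin φ ^ 2 * OmtLog Ω φ

def DLog (Ω : ℝ → ℝ) (a b : ℝ) : ℝ :=
  ∫ φ in (-π)..π,
    (a ^ 2 * Real.cos φ ^ 2 + b ^ 2 * Real.sin φ ^ 2)⁻¹ *
      (Real.cos φ * Real.sin φ) * OmtLog Ω φ

/-- The uniform probability measure on the rotated ellipse `B(0; a, b, η)`. -/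
def unifEllipse (a b η : ℝ) : Measure (ℝ × ℝ) :=
  volume.withDensity ((Rot η '' ellipseSet a b).indicator fun _ => ENNReal.ofReal ((π * a * b)⁻¹))

/-- The pushforward of the density `(2/(πb²)) (b² - t²)₊^{1/2} dt` under `t ↦ R_η (0, t)`. -/
def semicirc (b η : ℝ) : Measure (ℝ × ℝ) :=
  Measure.map (fun t : ℝ => Rot η (0, t))
    (volume.withDensity fun t =>
      ENNReal.ofReal (2 / (π * b ^ 2) * (max (b ^ 2 - t ^ 2) 0) ^ ((1 : ℝ) / 2)))

/-- The vertical semicircle measure `ρ_{1D}` for the logarithmic case. -/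
def rho1Dlog : Measure (ℝ × ℝ) :=
  Measure.map (fun t : ℝ => ((0 : ℝ), t))
    (volume.withDensity fun t => ENNReal.ofReal (2 / π * (max (1 - t ^ 2) 0) ^ ((1 : ℝ) / 2)))

/-- The measure `ψ(t) dt` placed on the vertical axis. -/
def rhoPsi (ψ : ℝ → ℝ) : Measure (ℝ × ℝ) :=
  Measure.map (fun t : ℝ => ((0 : ℝ), t)) (volume.withDensity fun t => ENNReal.ofReal (ψ t))



/-! ### Continuity and symmetry of the kernel -/

lemma nrm_nonneg (x : ℝ × ℝ) : 0 ≤ nrm x := Real.sqrt_nonneg _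

lemma nrm_sq (x : ℝ × ℝ) : nrm x ^ 2 = x.1 ^ 2 + x.2 ^ 2 := Real.sq_sqrt (by positivity)

lemma nrm_continuous : Continuous nrm := by unfold nrm; fun_prop

lemma nrm_zero : nrm 0 = 0 := by simp [nrm]

lemma nrm_neg (x : ℝ × ℝ) : nrm (-x) = nrm x := by simp [nrm]

lemma nrm_pos {x : ℝ × ℝ} (hx : x ≠ 0) : 0 < nrm x := by
  refine lt_of_le_of_ne (nrm_nonneg x) fun h => hx ?_
  have h2 := nrm_sq x
  rw [← h] at h2
  have h1 : x.1 = 0 := by nlinarith [sq_nonneg x.1, sq_nonneg x.2]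
  have h3 : x.2 = 0 := by nlinarith [sq_nonneg x.1, sq_nonneg x.2]
  exact Prod.ext h1 h3

/-- A `2π`-periodic function cannot tell `ang` from the principal argument. -/
lemma comp_ang {Ω : ℝ → ℝ} (hp : ∀ θ, Ω (θ + 2 * π) = Ω θ) (x : ℝ × ℝ) :
    Ω (ang x) = Ω (Complex.arg ⟨x.1, x.2⟩) := by
  unfold ang
  split_ifs with h
  · rw [h, ← hp (-π)]; congr 1; ring
  · rfl

/-- The principal argument jumps on the negative real axis, but it is continuous as a map into
`Real.Angle`, through which periodic functions factor. -/
lemma continuousAt_comp_ang {Ω : ℝ → ℝ} (hc : Continuous Ω) (hp : ∀ θ, Ω (θ + 2 * π) = Ω θ)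
    {x : ℝ × ℝ} (hx : x ≠ 0) : ContinuousAt (fun y => Ω (ang y)) x := by
  have hper : Function.Periodic Ω (2 * π) := hp
  let F : Real.Angle → ℝ := hper.lift
  have hF : Continuous F := continuous_coinduced_dom.mpr hc
  have hE : (fun y => Ω (ang y)) =
      fun y : ℝ × ℝ => F (((↑) ∘ Complex.arg : ℂ → Real.Angle) ⟨y.1, y.2⟩) := by
    funext y
    rw [comp_ang hp]
    rfl
  rw [hE]
  have hm : Continuous fun y : ℝ × ℝ => (⟨y.1, y.2⟩ : ℂ) :=
    Complex.equivRealProdCLM.symm.continuous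
  have hne : (⟨x.1, x.2⟩ : ℂ) ≠ 0 := by
    intro h
    apply hx
    rw [Complex.ext_iff] at h
    exact Prod.ext h.1 h.2
  have h1 := Complex.continuousAt_arg_coe_angle hne
  exact hF.continuousAt.comp
    (ContinuousAt.comp (f := fun y : ℝ × ℝ => (⟨y.1, y.2⟩ : ℂ)) (x := x) h1 hm.continuousAt)

lemma Wkernel_ne {s : ℝ} {Ω : ℝ → ℝ} {x : ℝ × ℝ} (hx : x ≠ 0) :
    Wkernel s Ω x = ENNReal.ofReal (nrm x ^ (-s) * Ω (ang x) + nrm x ^ 2) := by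
  simp [Wkernel, hx]

/-- The kernel is continuous as a `[0,∞]`-valued function: at the origin it tends to its
value `∞`, as `Ω ≥ 1`. -/
lemma Wkernel_continuous {s : ℝ} (hs : 0 < s) {Ω : ℝ → ℝ} (hc : Continuous Ω)
    (hp : ∀ θ, Ω (θ + 2 * π) = Ω θ) (h1 : ∀ θ, 1 ≤ Ω θ) : Continuous (Wkernel s Ω) := by
  rw [continuous_iff_continuousAt]
  intro x
  by_cases hx : x = 0
  · subst hx
    have hw : Wkernel s Ω 0 = ⊤ := by simp [Wkernel]
    rw [ContinuousAt, hw, ENNReal.tendsto_nhds_top_iff_nnreal]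
    intro n
    have hev : ∀ᶠ r in 𝓝[>] (0 : ℝ), (n : ℝ) < r ^ (-s) :=
      (tendsto_rpow_neg_nhdsGT_zero (neg_lt_zero.mpr hs)).eventually_gt_atTop _
    have ht : Tendsto nrm (𝓝[≠] 0) (𝓝[>] 0) := by
      refine tendsto_nhdsWithin_iff.mpr ⟨?_, ?_⟩
      · have := nrm_continuous.tendsto 0
        rw [nrm_zero] at this
        exact this.mono_left nhdsWithin_le_nhds
      · filter_upwards [self_mem_nhdsWithin] with y hy
        exact nrm_pos hy
    have h2 := ht.eventually hev
    rw [eventually_nhdsWithin_iff] at h2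
    filter_upwards [h2] with y hy
    by_cases hy0 : y = 0
    · subst hy0; rw [hw]; exact ENNReal.coe_lt_top
    · rw [Wkernel_ne hy0, ← ENNReal.ofReal_coe_nnreal]
      refine (ENNReal.ofReal_lt_ofReal_iff_of_nonneg n.coe_nonneg).mpr ?_
      have h3 := hy hy0
      have h4 : 0 ≤ nrm y ^ (-s) := Real.rpow_nonneg (nrm_nonneg y) _
      have h5 := mul_le_mul_of_nonneg_left (h1 (ang y)) h4
      nlinarith [sq_nonneg (nrm y)]
  · have hev : Wkernel s Ω =ᶠ[𝓝 x]
        fun y => ENNReal.ofReal (nrm y ^ (-s) * Ω (ang y) + nrm y ^ 2) := by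
      filter_upwards [isOpen_ne.mem_nhds hx] with y hy
      exact Wkernel_ne hy
    refine ContinuousAt.congr ?_ hev.symm
    refine ENNReal.continuous_ofReal.continuousAt.comp ?_
    have hn := nrm_continuous.continuousAt (x := x)
    exact ((hn.rpow_const (Or.inl (nrm_pos hx).ne')).mul
      (continuousAt_comp_ang hc hp hx)).add (hn.pow 2)

lemma Wkernel_neg {s : ℝ} {Ω : ℝ → ℝ} (hp : ∀ θ, Ω (θ + 2 * π) = Ω θ)
    (hpi : ∀ θ, Ω (θ + π) = Ω θ) (x : ℝ × ℝ) : Wkernel s Ω (-x) = Wkernel s Ω x := by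
  by_cases hx : x = 0
  · simp [hx]
  · have hx' : -x ≠ 0 := neg_ne_zero.mpr hx
    rw [Wkernel_ne hx, Wkernel_ne hx', nrm_neg]
    suffices h : Ω (ang (-x)) = Ω (ang x) by rw [h]
    rw [comp_ang hp, comp_ang hp]
    have hne : (⟨x.1, x.2⟩ : ℂ) ≠ 0 := by
      intro h
      apply hx
      rw [Complex.ext_iff] at h
      exact Prod.ext h.1 h.2
    have hneg : (⟨(-x).1, (-x).2⟩ : ℂ) = -⟨x.1, x.2⟩ := by
      apply Complex.ext <;> simp
    rw [hneg]
    have hper : Function.Periodic Ω (2 * π) := hp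
    have h1 := Complex.arg_neg_coe_angle hne
    have h2 : ((Complex.arg ⟨x.1, x.2⟩ + π : ℝ) : Real.Angle) =
        (Complex.arg (-⟨x.1, x.2⟩) : Real.Angle) := by rw [h1]; simp
    have h3 := congrArg (hper.lift : Real.Angle → ℝ) h2
    have h4 : Ω (Complex.arg ⟨x.1, x.2⟩ + π) = Ω (Complex.arg (-⟨x.1, x.2⟩)) := h3
    rw [← h4, hpi]

lemma sq_le_Wkernel {s : ℝ} {Ω : ℝ → ℝ} (h1 : ∀ θ, 1 ≤ Ω θ) (x : ℝ × ℝ) :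
    ENNReal.ofReal (nrm x ^ 2) ≤ Wkernel s Ω x := by
  by_cases hx : x = 0
  · simp [hx, Wkernel]
  · rw [Wkernel_ne hx]
    apply ENNReal.ofReal_le_ofReal
    have h4 : 0 ≤ nrm x ^ (-s) := Real.rpow_nonneg (nrm_nonneg x) _
    nlinarith [h1 (ang x)]

/-! ### Compactness and existence of minimizers -/

/-- The double integral `∬ V(x-y) dρ(y) dρ(x)`. -/
def dbl (V : ℝ × ℝ → ℝ≥0∞) (ρ : Measure (ℝ × ℝ)) : ℝ≥0∞ := ∫⁻ x, ∫⁻ y, V (x - y) ∂ρ ∂ρ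

/-- A continuous `[0,∞]`-valued function is the supremum of its truncations, whose integrals
are weakly continuous in the measure. -/
lemma lsc_lintegral {X : Type*} [TopologicalSpace X] [MeasurableSpace X] [OpensMeasurableSpace X]
    {f : X → ℝ≥0∞} (hf : Continuous f) :
    LowerSemicontinuous fun μ : ProbabilityMeasure X => ∫⁻ x, f x ∂(μ : Measure X) := by
  have hsup : ∀ a : ℝ≥0∞, ⨆ n : ℕ, min a n = a := by
    intro a
    refine le_antisymm (iSup_le fun n => min_le_left _ _) ?_
    refine le_of_forall_lt fun b hb => ?_
    obtain ⟨n, hn⟩ := ENNReal.exists_nat_gt (ne_top_of_lt hb)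
    exact (lt_min hb hn).trans_le (le_iSup (fun n : ℕ => min a (n : ℝ≥0∞)) n)
  have heq : (fun μ : ProbabilityMeasure X => ∫⁻ x, f x ∂(μ : Measure X)) =
      fun μ : ProbabilityMeasure X => ⨆ n : ℕ, ∫⁻ x, min (f x) n ∂(μ : Measure X) := by
    funext μ
    rw [← lintegral_iSup]
    · simp_rw [hsup]
    · intro n
      exact hf.measurable.min measurable_const
    · intro m n hmn x
      exact min_le_min le_rfl (by exact_mod_cast hmn)
  rw [heq]
  refine lowerSemicontinuous_iSup fun n => Continuous.lowerSemicontinuous ?_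
  have hfin : ∀ x, min (f x) (n : ℝ≥0∞) ≠ ⊤ := fun x =>
    ne_top_of_le_ne_top (ENNReal.natCast_ne_top n) (min_le_right _ _)
  have hcont : Continuous fun x => (min (f x) (n : ℝ≥0∞)).toNNReal :=
    ENNReal.continuousOn_toNNReal.comp_continuous (hf.min continuous_const) hfin
  let g : BoundedContinuousFunction X NNReal :=
    BoundedContinuousFunction.mkOfBound ⟨_, hcont⟩ n (by
      intro x y
      have hb : ∀ z, (min (f z) (n : ℝ≥0∞)).toNNReal ≤ (n : NNReal) := by
        intro z
        rw [← ENNReal.coe_le_coe, ENNReal.coe_toNNReal (hfin z)]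
        exact_mod_cast min_le_right _ _
      have hx : ((min (f x) (n : ℝ≥0∞)).toNNReal : ℝ) ≤ n := by exact_mod_cast hb x
      have hy : ((min (f y) (n : ℝ≥0∞)).toNNReal : ℝ) ≤ n := by exact_mod_cast hb y
      have hx0 := (min (f x) (n : ℝ≥0∞)).toNNReal.coe_nonneg
      have hy0 := (min (f y) (n : ℝ≥0∞)).toNNReal.coe_nonneg
      simp only [ContinuousMap.coe_mk]
      rw [NNReal.dist_eq, abs_le]
      constructor <;> linarith)
  have hg := ProbabilityMeasure.continuous_lintegral_boundedContinuousFunction g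
  refine hg.congr fun μ => lintegral_congr fun x => ?_
  exact ENNReal.coe_toNNReal (hfin x)

lemma dbl_lsc {V : ℝ × ℝ → ℝ≥0∞} (hV : Continuous V) :
    LowerSemicontinuous fun μ : ProbabilityMeasure (ℝ × ℝ) => dbl V μ := by
  have h1 : Continuous fun p : (ℝ × ℝ) × (ℝ × ℝ) => V (p.1 - p.2) :=
    hV.comp (continuous_fst.sub continuous_snd)
  have h2 : Continuous fun μ : ProbabilityMeasure (ℝ × ℝ) => μ.prod μ :=
    ProbabilityMeasure.continuous_prod.comp (continuous_id.prodMk continuous_id)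
  have h3 := (lsc_lintegral h1).comp h2
  convert h3 using 2 with μ
  simp only [dbl, Function.comp, ProbabilityMeasure.toMeasure_prod]
  rw [lintegral_prod _ h1.measurable.aemeasurable]

/-- Measures with second moment at most `C` form a weakly compact set: it is tight by Markov's
inequality, and closed by lower semicontinuity of the second moment. -/
lemma isCompact_moment {C : ℝ≥0∞} (hC : C ≠ ⊤) :
    IsCompact {μ : ProbabilityMeasure (ℝ × ℝ) |
      ∫⁻ x, ENNReal.ofReal (nrm x ^ 2) ∂(μ : Measure (ℝ × ℝ)) ≤ C} := by
  have hfc : Continuous fun x : ℝ × ℝ => ENNReal.ofReal (nrm x ^ 2) :=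
    ENNReal.continuous_ofReal.comp (nrm_continuous.pow 2)
  have hcl : IsClosed {μ : ProbabilityMeasure (ℝ × ℝ) |
      ∫⁻ x, ENNReal.ofReal (nrm x ^ 2) ∂(μ : Measure (ℝ × ℝ)) ≤ C} :=
    (lsc_lintegral hfc).isClosed_preimage C
  rw [← hcl.closure_eq]
  apply isCompact_closure_of_isTightMeasureSet
  rw [isTightMeasureSet_iff_exists_isCompact_measure_compl_le]
  intro ε hε
  obtain ⟨n, hn0, hn⟩ : ∃ n : ℕ, 0 < n ∧ C / (n : ℝ≥0∞) ≤ ε := by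
    have ht : Tendsto (fun n : ℕ => C / (n : ℝ≥0∞)) atTop (𝓝 0) := by
      have := ENNReal.Tendsto.const_mul ENNReal.tendsto_inv_nat_nhds_zero (a := C) (Or.inr hC)
      simpa [div_eq_mul_inv] using this
    have h1 := ht.eventually (ge_mem_nhds hε)
    obtain ⟨n, h2, h3⟩ := (h1.and (eventually_gt_atTop 0)).exists
    exact ⟨n, h3, h2⟩
  refine ⟨{x | nrm x ^ 2 ≤ n}, ?_, ?_⟩
  · refine Metric.isCompact_of_isClosed_isBounded
      (isClosed_le (nrm_continuous.pow 2) continuous_const) ?_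
    refine (Metric.isBounded_closedBall (x := (0 : ℝ × ℝ)) (r := n + 1)).subset ?_
    intro x hx
    have hx' : nrm x ^ 2 ≤ n := hx
    rw [nrm_sq] at hx'
    rw [mem_closedBall_zero_iff, Prod.norm_def]
    have hn' : (0 : ℝ) ≤ n := by positivity
    refine max_le ?_ ?_ <;> rw [Real.norm_eq_abs] <;> refine abs_le_of_sq_le_sq ?_ (by positivity)
    · nlinarith [sq_nonneg x.2]
    · nlinarith [sq_nonneg x.1]
  · rintro _ ⟨μ, hμ, rfl⟩
    have hsub : {x : ℝ × ℝ | nrm x ^ 2 ≤ n}ᶜ ⊆ {x | (n : ℝ≥0∞) ≤ ENNReal.ofReal (nrm x ^ 2)} := by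
      intro x hx
      have hx' : (n : ℝ) < nrm x ^ 2 := not_le.mp hx
      show (n : ℝ≥0∞) ≤ ENNReal.ofReal (nrm x ^ 2)
      rw [← ENNReal.ofReal_natCast]
      exact ENNReal.ofReal_le_ofReal hx'.le
    calc (μ : Measure (ℝ × ℝ)) _ ≤ _ := measure_mono hsub
      _ ≤ (∫⁻ x, ENNReal.ofReal (nrm x ^ 2) ∂(μ : Measure (ℝ × ℝ))) / n :=
        meas_ge_le_lintegral_div hfc.measurable.aemeasurable
          (by exact_mod_cast hn0.ne') (ENNReal.natCast_ne_top n)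
      _ ≤ C / n := ENNReal.div_le_div_right hμ _
      _ ≤ ε := hn

/-- A measure of energy at most `C` can be reflected and translated, at no cost in energy, into
the set of measures with second moment at most `C`. -/
lemma exists_translate {V : ℝ × ℝ → ℝ≥0∞} (hV : Continuous V) (hneg : ∀ x, V (-x) = V x)
    (hsq : ∀ x, ENNReal.ofReal (nrm x ^ 2) ≤ V x) {C : ℝ≥0∞}
    (μ : Measure (ℝ × ℝ)) [IsProbabilityMeasure μ] (hμ : dbl V μ ≤ C) :
    ∃ μ' : ProbabilityMeasure (ℝ × ℝ),
      ∫⁻ x, ENNReal.ofReal (nrm x ^ 2) ∂(μ' : Measure (ℝ × ℝ)) ≤ C ∧ dbl V μ' = dbl V μ := by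
  have hm2 : Measurable fun p : (ℝ × ℝ) × (ℝ × ℝ) => V (p.1 - p.2) :=
    hV.measurable.comp (measurable_fst.sub measurable_snd)
  have hmU : ∀ ν : Measure (ℝ × ℝ), SFinite ν → Measurable fun x => ∫⁻ y, V (x - y) ∂ν :=
    fun ν _ => hm2.lintegral_prod_right'
  obtain ⟨z, hz⟩ := exists_le_lintegral (hmU μ inferInstance).aemeasurable (μ := μ)
  have hT : Measurable fun y : ℝ × ℝ => z - y := measurable_const.sub measurable_id
  have hP : IsProbabilityMeasure (μ.map fun y => z - y) :=
    Measure.isProbabilityMeasure_map hT.aemeasurable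
  refine ⟨⟨μ.map fun y => z - y, hP⟩, ?_, ?_⟩
  · show ∫⁻ x, ENNReal.ofReal (nrm x ^ 2) ∂(μ.map fun y => z - y) ≤ C
    have hn : Measurable fun x : ℝ × ℝ => ENNReal.ofReal (nrm x ^ 2) :=
      (ENNReal.continuous_ofReal.comp (nrm_continuous.pow 2)).measurable
    rw [lintegral_map hn hT]
    exact (lintegral_mono fun y => hsq _).trans (hz.trans hμ)
  · show dbl V (μ.map fun y => z - y) = dbl V μ
    unfold dbl
    rw [lintegral_map (hmU _ inferInstance) hT]
    refine lintegral_congr fun x => ?_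
    rw [lintegral_map (f := fun y => V (z - x - y))
      (hV.measurable.comp (measurable_const.sub measurable_id)) hT]
    refine lintegral_congr fun y => ?_
    rw [← hneg]
    congr 1
    abel

lemma exists_minimizer_dbl {V : ℝ × ℝ → ℝ≥0∞} (hV : Continuous V) (hneg : ∀ x, V (-x) = V x)
    (hsq : ∀ x, ENNReal.ofReal (nrm x ^ 2) ≤ V x)
    (ν : Measure (ℝ × ℝ)) [IsProbabilityMeasure ν] (hν : dbl V ν ≠ ⊤) :
    ∃ ρ : Measure (ℝ × ℝ), IsMinimizer (dbl V) ρ := by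
  obtain ⟨ν', hν', hν'e⟩ := exists_translate hV hneg hsq ν le_rfl
  obtain ⟨ρ, -, hmin⟩ := LowerSemicontinuousOn.exists_isMinOn ⟨ν', hν'⟩ (isCompact_moment hν)
    ((dbl_lsc hV).lowerSemicontinuousOn _)
  refine ⟨ρ, inferInstance, fun μ hμ => ?_⟩
  by_cases h : dbl V μ ≤ dbl V ν
  · obtain ⟨μ', hμ', hμ'e⟩ := exists_translate hV hneg hsq μ h
    exact (hmin hμ').trans hμ'e.le
  · exact ((hmin hν').trans hν'e.le).trans (not_le.mp h).le

/-! ### The Euler–Lagrange condition -/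

lemma nonpos_of_forall_le_mul {c d : ℝ} (h : ∀ t, 0 < t → t < 1 → d ≤ t * c) : d ≤ 0 := by
  by_contra! hd
  have hp : 0 < 2 * (|c| + d) := by positivity
  have h1 := h (d / (2 * (|c| + d))) (by positivity)
    (by rw [div_lt_one hp]; nlinarith [abs_nonneg c])
  rw [div_mul_eq_mul_div, le_div_iff₀ hp] at h1
  nlinarith [le_abs_self c]

/-- Bilinear expansion of the double integral along a linear interpolation. -/
lemma dbl_mix {V : ℝ × ℝ → ℝ≥0∞} (hV : Measurable V) (hneg : ∀ x, V (-x) = V x)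
    (ρ ν : Measure (ℝ × ℝ)) [SFinite ρ] [SFinite ν] (t : ℝ) :
    dbl V (mix ρ ν t) = ENNReal.ofReal (1 - t) * (ENNReal.ofReal (1 - t) * dbl V ρ) +
      2 * (ENNReal.ofReal t * (ENNReal.ofReal (1 - t) * ∫⁻ x, ∫⁻ y, V (x - y) ∂ρ ∂ν)) +
      ENNReal.ofReal t * (ENNReal.ofReal t * dbl V ν) := by
  have hm2 : Measurable fun p : (ℝ × ℝ) × (ℝ × ℝ) => V (p.1 - p.2) :=
    hV.comp (measurable_fst.sub measurable_snd)
  have hρ : Measurable fun x => ∫⁻ y, V (x - y) ∂ρ := hm2.lintegral_prod_right'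
  have hν : Measurable fun x => ∫⁻ y, V (x - y) ∂ν := hm2.lintegral_prod_right'
  have hsymm : ∫⁻ x, ∫⁻ y, V (x - y) ∂ν ∂ρ = ∫⁻ x, ∫⁻ y, V (x - y) ∂ρ ∂ν := by
    rw [lintegral_lintegral_swap hm2.aemeasurable]
    refine lintegral_congr fun x => lintegral_congr fun y => ?_
    rw [← hneg, neg_sub]
  unfold dbl mix
  simp only [lintegral_add_measure, lintegral_smul_measure, smul_eq_mul]
  rw [lintegral_add_left (hρ.const_mul _), lintegral_add_left (hρ.const_mul _),
    lintegral_const_mul _ hρ, lintegral_const_mul _ hν, lintegral_const_mul _ hρ,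
    lintegral_const_mul _ hν, hsymm]
  ring

/-- First variation in the direction `ν`: the potential of a minimizer, averaged against any `ν`
of finite energy, is at least its average against the minimizer itself. -/
lemma le_cross {V : ℝ × ℝ → ℝ≥0∞} (hV : Measurable V) (hneg : ∀ x, V (-x) = V x)
    {ρ ν : Measure (ℝ × ℝ)} (hρ : IsMinimizer (dbl V) ρ) [IsProbabilityMeasure ν]
    (hI : dbl V ρ ≠ ⊤) (hp : ∫⁻ x, ∫⁻ y, V (x - y) ∂ρ ∂ν ≠ ⊤) (hq : dbl V ν ≠ ⊤) :
    dbl V ρ ≤ ∫⁻ x, ∫⁻ y, V (x - y) ∂ρ ∂ν := by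
  have := hρ.1
  rw [← ENNReal.toReal_le_toReal hI hp, ← sub_nonpos]
  have key : ∀ t : ℝ, 0 < t → t < 1 →
      2 * ((dbl V ρ).toReal - (∫⁻ x, ∫⁻ y, V (x - y) ∂ρ ∂ν).toReal) ≤
      t * ((dbl V ρ).toReal - 2 * (∫⁻ x, ∫⁻ y, V (x - y) ∂ρ ∂ν).toReal + (dbl V ν).toReal) := by
    intro t ht0 ht1
    have hmp : IsProbabilityMeasure (mix ρ ν t) := by
      constructor
      simp only [mix, Measure.coe_add, Measure.coe_smul, Pi.add_apply, Pi.smul_apply,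
        measure_univ, smul_eq_mul, mul_one]
      rw [← ENNReal.ofReal_add (by linarith) ht0.le]
      simp
    have h := hρ.2 _ hmp
    rw [dbl_mix hV hneg] at h
    have e1 := ENNReal.ofReal_toReal hI
    have e2 := ENNReal.ofReal_toReal hp
    have e3 := ENNReal.ofReal_toReal hq
    have hI0 : 0 ≤ (dbl V ρ).toReal := ENNReal.toReal_nonneg
    have hp0 : 0 ≤ (∫⁻ x, ∫⁻ y, V (x - y) ∂ρ ∂ν).toReal := ENNReal.toReal_nonneg
    have hq0 : 0 ≤ (dbl V ν).toReal := ENNReal.toReal_nonneg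
    have h1t : 0 ≤ 1 - t := by linarith
    generalize (dbl V ρ).toReal = I at *
    generalize (∫⁻ x, ∫⁻ y, V (x - y) ∂ρ ∂ν).toReal = p at *
    generalize (dbl V ν).toReal = q at *
    rw [← e1, ← e2, ← e3, show (2 : ℝ≥0∞) = ENNReal.ofReal 2 by simp] at h
    rw [← ENNReal.ofReal_mul h1t, ← ENNReal.ofReal_mul h1t, ← ENNReal.ofReal_mul h1t,
      ← ENNReal.ofReal_mul ht0.le, ← ENNReal.ofReal_mul ht0.le, ← ENNReal.ofReal_mul ht0.le,
      ← ENNReal.ofReal_mul (by norm_num), ← ENNReal.ofReal_add (by positivity) (by positivity),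
      ← ENNReal.ofReal_add (by positivity) (by positivity),
      ENNReal.ofReal_le_ofReal_iff (by positivity)] at h
    have h' : t * (2 * (I - p)) ≤ t * (t * (I - 2 * p + q)) := by linarith
    exact le_of_mul_le_mul_left h' ht0
  have := nonpos_of_forall_le_mul key
  linarith

/-- Euler–Lagrange condition: the potential of a minimizer is almost everywhere at most the
double integral. Testing with `ρ` conditioned on `A` shows that the potential `U` has
`∫_A U dρ ≥ I ρ(A)`; hence `U ≥ I` almost everywhere, with equality because `∫ U dρ = I`. -/
lemma potential_le {V : ℝ × ℝ → ℝ≥0∞} (hV : Measurable V) (hneg : ∀ x, V (-x) = V x)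
    {ρ : Measure (ℝ × ℝ)} (hρ : IsMinimizer (dbl V) ρ) (hI : dbl V ρ ≠ ⊤) :
    ∀ᵐ x ∂ρ, ∫⁻ y, V (x - y) ∂ρ ≤ dbl V ρ := by
  have := hρ.1
  have hm2 : Measurable fun p : (ℝ × ℝ) × (ℝ × ℝ) => V (p.1 - p.2) :=
    hV.comp (measurable_fst.sub measurable_snd)
  have hmU : Measurable fun x => ∫⁻ y, V (x - y) ∂ρ := hm2.lintegral_prod_right'
  have hge : (fun _ => dbl V ρ) ≤ᵐ[ρ] fun x => ∫⁻ y, V (x - y) ∂ρ := by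
    set A := {x | ∫⁻ y, V (x - y) ∂ρ < dbl V ρ} with hA
    have hAm : MeasurableSet A := measurableSet_lt hmU measurable_const
    suffices h0 : ρ A = 0 by
      have : ∀ᵐ x ∂ρ, x ∉ A := measure_eq_zero_iff_ae_notMem.mp h0
      filter_upwards [this] with x hx
      exact not_lt.mp hx
    by_contra hA0
    have hνP : IsProbabilityMeasure (ProbabilityTheory.cond ρ A) :=
      ProbabilityTheory.cond_isProbabilityMeasure hA0
    have hνle : ProbabilityTheory.cond ρ A ≤ (ρ A)⁻¹ • ρ := by
      rw [ProbabilityTheory.cond]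
      intro B
      simp only [Measure.smul_apply, smul_eq_mul]
      gcongr
      exact Measure.restrict_le_self
    have hinv : (ρ A)⁻¹ ≠ ⊤ := ENNReal.inv_ne_top.mpr hA0
    have hbd : ∀ f : ℝ × ℝ → ℝ≥0∞, ∫⁻ x, f x ∂(ProbabilityTheory.cond ρ A) ≤
        (ρ A)⁻¹ * ∫⁻ x, f x ∂ρ := by
      intro f
      refine (lintegral_mono' hνle le_rfl).trans ?_
      rw [lintegral_smul_measure, smul_eq_mul]
    have hp : ∫⁻ x, ∫⁻ y, V (x - y) ∂ρ ∂(ProbabilityTheory.cond ρ A) ≠ ⊤ :=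
      ne_top_of_le_ne_top (ENNReal.mul_ne_top hinv hI) (hbd _)
    have hq : dbl V (ProbabilityTheory.cond ρ A) ≠ ⊤ := by
      refine ne_top_of_le_ne_top (ENNReal.mul_ne_top hinv hp) ?_
      unfold dbl
      rw [← lintegral_const_mul _ hmU]
      exact lintegral_mono fun x => hbd _
    have h1 := le_cross hV hneg hρ hI hp hq
    have hmem : ∀ᵐ x ∂(ProbabilityTheory.cond ρ A), x ∈ A :=
      ProbabilityTheory.ae_cond_mem hAm
    have h2 : (fun x => ∫⁻ y, V (x - y) ∂ρ) =ᵐ[ProbabilityTheory.cond ρ A]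
        fun _ => dbl V ρ := by
      refine ae_eq_of_ae_le_of_lintegral_le ?_ hp aemeasurable_const ?_
      · filter_upwards [hmem] with x hx using le_of_lt hx
      · simpa using h1
    obtain ⟨x, hx1, hx2⟩ := (hmem.and h2).exists
    exact (ne_of_lt hx1) hx2
  have heq := ae_eq_of_ae_le_of_lintegral_le hge (by simpa using hI) hmU.aemeasurable
    (by simp [dbl])
  filter_upwards [heq] with x hx using hx.symm.le

/-! ### The support bound -/

/-- For a centred probability measure, `|x|² ≤ ∫ |x-y|² dρ(y)`. -/
lemma sq_le_second_moment {ρ : Measure (ℝ × ℝ)} [IsProbabilityMeasure ρ] (h0 : ∫ x, x ∂ρ = 0)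
    (x : ℝ × ℝ) :
    ENNReal.ofReal (nrm x ^ 2) ≤ ∫⁻ y, ENNReal.ofReal (nrm (x - y) ^ 2) ∂ρ := by
  by_cases hfin : ∫⁻ y, ENNReal.ofReal (nrm (x - y) ^ 2) ∂ρ = ⊤
  · rw [hfin]; exact le_top
  have hcont : Continuous fun y : ℝ × ℝ => nrm (x - y) ^ 2 :=
    (nrm_continuous.comp (continuous_const.sub continuous_id)).pow 2
  have hint : Integrable (fun y => nrm (x - y) ^ 2) ρ := by
    refine ⟨hcont.aestronglyMeasurable, ?_⟩
    rw [hasFiniteIntegral_iff_ofReal (ae_of_all _ fun y => by positivity)]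
    exact lt_top_iff_ne_top.mpr hfin
  have hid : Integrable (fun y : ℝ × ℝ => y) ρ := by
    refine Integrable.mono' ((integrable_const (‖x‖ + 1)).add hint)
      continuous_id.aestronglyMeasurable (ae_of_all _ fun y => ?_)
    have h1 : ‖x - y‖ ≤ 1 + nrm (x - y) ^ 2 := by
      rw [nrm_sq, Prod.norm_def]
      refine max_le ?_ ?_ <;> rw [Real.norm_eq_abs, abs_le] <;> constructor <;>
        nlinarith [sq_nonneg ((x - y).1 - 1), sq_nonneg ((x - y).2 - 1),
          sq_nonneg ((x - y).1 + 1), sq_nonneg ((x - y).2 + 1)]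
    have h2 : ‖y‖ ≤ ‖x‖ + ‖x - y‖ := by
      have := norm_sub_le x (x - y)
      simpa using this
    simp only [Pi.add_apply]
    linarith
  have hi1 : Integrable (fun y : ℝ × ℝ => y.1) ρ := hid.fst
  have hi2 : Integrable (fun y : ℝ × ℝ => y.2) ρ := hid.snd
  have h1 : ∫ y : ℝ × ℝ, y.1 ∂ρ = 0 := by
    have := (ContinuousLinearMap.fst ℝ ℝ ℝ).integral_comp_comm hid
    simpa [h0] using this
  have h2 : ∫ y : ℝ × ℝ, y.2 ∂ρ = 0 := by
    have := (ContinuousLinearMap.snd ℝ ℝ ℝ).integral_comp_comm hid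
    simpa [h0] using this
  rw [← ofReal_integral_eq_lintegral_ofReal hint (ae_of_all _ fun y => by positivity)]
  apply ENNReal.ofReal_le_ofReal
  have hlin : Integrable (fun y : ℝ × ℝ => 2 * x.1 * y.1 + 2 * x.2 * y.2) ρ :=
    (hi1.const_mul _).add (hi2.const_mul _)
  have h3 : ∫ y : ℝ × ℝ, (nrm x ^ 2 - (2 * x.1 * y.1 + 2 * x.2 * y.2)) ∂ρ = nrm x ^ 2 := by
    rw [integral_sub (integrable_const _) hlin,
      integral_add (hi1.const_mul _) (hi2.const_mul _), integral_const_mul, integral_const_mul,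
      h1, h2]
    simp
  rw [← h3]
  refine integral_mono ((integrable_const _).sub hlin) hint fun y => ?_
  simp only [nrm_sq, Prod.fst_sub, Prod.snd_sub]
  nlinarith [sq_nonneg y.1, sq_nonneg y.2]

/-! ### A competitor with energy independent of the anisotropy -/

/-- The uniform probability measure on the vertical unit segment. -/
def segM : Measure (ℝ × ℝ) :=
  Measure.map (fun t : ℝ => ((0 : ℝ), t)) (volume.restrict (Icc 0 1))

/-- An upper bound, depending only on `s`, for the double integral of the segment. -/
def segBound (s : ℝ) : ℝ≥0∞ :=
  ∫⁻ v in Icc (-1 : ℝ) 1, ENNReal.ofReal (|v| ^ (-s) + |v| ^ 2)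

instance : IsProbabilityMeasure segM := by
  have : IsProbabilityMeasure ((volume : Measure ℝ).restrict (Icc 0 1)) := ⟨by simp⟩
  exact Measure.isProbabilityMeasure_map (by fun_prop)

lemma segBound_ne_top {s : ℝ} (hs1 : s < 1) : segBound s ≠ ⊤ := by
  have h1 : IntegrableOn (fun v : ℝ => v ^ (-s)) (Icc 0 1) := by
    rw [integrableOn_Icc_iff_integrableOn_Ioc]
    exact (intervalIntegrable_iff_integrableOn_Ioc_of_le zero_le_one).mp
      (intervalIntegral.intervalIntegrable_rpow' (by linarith))
  have h2 : IntegrableOn (fun v : ℝ => |v| ^ (-s)) (Icc 0 1) :=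
    h1.congr_fun (fun v hv => by simp only [abs_of_nonneg hv.1]) measurableSet_Icc
  have h3 : IntegrableOn (fun v : ℝ => |v| ^ (-s)) (Icc (-1) 0) := by
    have := h2.comp_neg
    simpa using this
  have h4 : IntegrableOn (fun v : ℝ => |v| ^ (-s)) (Icc (-1) 1) := by
    have := h3.union h2
    rwa [Icc_union_Icc_eq_Icc (by norm_num) (by norm_num)] at this
  have h5 : IntegrableOn (fun v : ℝ => |v| ^ 2) (Icc (-1) 1) :=
    (continuous_abs.pow 2).continuousOn.integrableOn_Icc
  have h6 : HasFiniteIntegral (fun v : ℝ => |v| ^ (-s) + |v| ^ 2)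
      (volume.restrict (Icc (-1) 1)) := (h4.add h5).2
  rw [hasFiniteIntegral_iff_ofReal
    (ae_of_all _ fun v => add_nonneg (Real.rpow_nonneg (abs_nonneg v) _) (by positivity))] at h6
  exact h6.ne

/-- On the vertical axis the angular factor is `Ω(π/2) = 1`. -/
lemma Wkernel_vertical {s : ℝ} {Ω : ℝ → ℝ} (hp : ∀ θ, Ω (θ + 2 * π) = Ω θ)
    (hpi : ∀ θ, Ω (θ + π) = Ω θ) (h2 : Ω (π / 2) = 1) {v : ℝ} (hv : v ≠ 0) :
    Wkernel s Ω (0, v) = ENNReal.ofReal (|v| ^ (-s) + |v| ^ 2) := by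
  have pos : ∀ w : ℝ, 0 < w → Wkernel s Ω (0, w) = ENNReal.ofReal (|w| ^ (-s) + |w| ^ 2) := by
    intro w hw
    rw [Wkernel_ne (by simp [hw.ne']), comp_ang hp]
    have ha : Complex.arg ⟨0, w⟩ = π / 2 := by
      rw [Complex.arg_eq_pi_div_two_iff]; exact ⟨rfl, hw⟩
    have hn : nrm (0, w) = |w| := by simp [nrm, Real.sqrt_sq_eq_abs]
    simp only
    rw [ha, h2, hn, mul_one]
  rcases lt_or_gt_of_ne hv with h | h
  · rw [← Wkernel_neg hp hpi]
    have := pos (-v) (by linarith)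
    simpa using this
  · exact pos v h

lemma dbl_segM_le {s : ℝ} {Ω : ℝ → ℝ} (hm : Measurable (Wkernel s Ω))
    (hp : ∀ θ, Ω (θ + 2 * π) = Ω θ) (hpi : ∀ θ, Ω (θ + π) = Ω θ) (h2 : Ω (π / 2) = 1) :
    dbl (Wkernel s Ω) segM ≤ segBound s := by
  have hm2 : Measurable fun p : (ℝ × ℝ) × (ℝ × ℝ) => Wkernel s Ω (p.1 - p.2) :=
    hm.comp (measurable_fst.sub measurable_snd)
  have hj : Measurable fun t : ℝ => ((0 : ℝ), t) := by fun_prop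
  set k : ℝ → ℝ≥0∞ := fun v => Wkernel s Ω (0, v) with hk
  have hkb : ∫⁻ v in Icc (-1 : ℝ) 1, k v = segBound s := by
    refine lintegral_congr_ae (ae_restrict_of_ae ?_)
    have : ∀ᵐ v : ℝ, v ≠ 0 := by simp [ae_iff, measure_singleton]
    filter_upwards [this] with v hv
    exact Wkernel_vertical hp hpi h2 hv
  have hinner : ∀ t ∈ Icc (0 : ℝ) 1, ∫⁻ u in Icc (0 : ℝ) 1, k (t - u) ≤ segBound s := by
    intro t ht
    rw [← hkb, ← lintegral_indicator measurableSet_Icc, ← lintegral_indicator measurableSet_Icc,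
      ← lintegral_sub_left_eq_self ((Icc (-1 : ℝ) 1).indicator k) t]
    refine lintegral_mono fun u => ?_
    by_cases hu : u ∈ Icc (0 : ℝ) 1
    · have : t - u ∈ Icc (-1 : ℝ) 1 := ⟨by linarith [ht.1, hu.2], by linarith [ht.2, hu.1]⟩
      simp [hu, this]
    · simp only [indicator_of_notMem hu]
      exact zero_le
  have hU : Measurable fun x => ∫⁻ y, Wkernel s Ω (x - y) ∂segM := hm2.lintegral_prod_right'
  unfold dbl
  conv_lhs => rw [segM]
  rw [lintegral_map (by simpa [segM] using hU) hj]
  calc _ ≤ ∫⁻ t in Icc (0 : ℝ) 1, segBound s := by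
        refine setLIntegral_mono measurable_const fun t ht => ?_
        rw [lintegral_map (f := fun y => Wkernel s Ω ((0, t) - y))
          (hm.comp (measurable_const.sub measurable_id)) hj]
        simpa [hk] using hinner t ht
    _ = segBound s := by simp

lemma energy_minimizer_iff {s : ℝ} {Ω : ℝ → ℝ} {ρ : Measure (ℝ × ℝ)} :
    IsMinimizer (energy s Ω) ρ ↔ IsMinimizer (dbl (Wkernel s Ω)) ρ := by
  have h : ∀ μ ν : Measure (ℝ × ℝ), energy s Ω μ ≤ energy s Ω ν ↔
      dbl (Wkernel s Ω) μ ≤ dbl (Wkernel s Ω) ν := by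
    intro μ ν
    exact ENNReal.mul_le_mul_iff_right (by simp) (by simp)
  unfold IsMinimizer
  simp only [h]

/-- for `0 < s < 1`, for every `ω` satisfying (h) and every `α ≥ 0` the
energy `E_α` admits a minimizer among probability measures; moreover there is a radius
`R > 0` depending only on `s` (independent of `α` and `ω`) such that every minimizer
with zero center of mass is supported in the closed ball of radius `R`. -/
theorem statement19 (s : ℝ) (hs0 : 0 < s) (hs1 : s < 1) :
    (∀ ω : ℝ → ℝ, Satisfiesh ω → ∀ α : ℝ, 0 ≤ α →
      ∃ ρ : Measure (ℝ × ℝ), IsMinimizer (energy s fun θ => 1 + α * ω θ) ρ) ∧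
    ∃ R : ℝ, 0 < R ∧ ∀ ω : ℝ → ℝ, Satisfiesh ω → ∀ α : ℝ, 0 ≤ α →
      ∀ ρ : Measure (ℝ × ℝ), IsMinimizer (energy s fun θ => 1 + α * ω θ) ρ →
        (∫ x, x ∂ρ) = 0 →
        msupport ρ ⊆ {x : ℝ × ℝ | nrm x ≤ R} := by
  have hC := segBound_ne_top hs1
  have hfacts : ∀ ω : ℝ → ℝ, Satisfiesh ω → ∀ α : ℝ, 0 ≤ α →
      Continuous (Wkernel s fun θ => 1 + α * ω θ) ∧
      (∀ x, Wkernel s (fun θ => 1 + α * ω θ) (-x) = Wkernel s (fun θ => 1 + α * ω θ) x) ∧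
      (∀ x, ENNReal.ofReal (nrm x ^ 2) ≤ Wkernel s (fun θ => 1 + α * ω θ) x) ∧
      dbl (Wkernel s fun θ => 1 + α * ω θ) segM ≤ segBound s := by
    rintro ω ⟨hsm, hp, hnn, -, hpi, h2⟩ α hα
    have hc : Continuous fun θ => 1 + α * ω θ := by
      have := hsm.continuous
      fun_prop
    have hp' : ∀ θ, (fun θ => 1 + α * ω θ) (θ + 2 * π) = (fun θ => 1 + α * ω θ) θ := by
      simp [hp]
    have hpi' : ∀ θ, (fun θ => 1 + α * ω θ) (θ + π) = (fun θ => 1 + α * ω θ) θ := by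
      simp [hpi]
    have h1 : ∀ θ, 1 ≤ (fun θ => 1 + α * ω θ) θ := fun θ => by
      simpa using mul_nonneg hα (hnn θ)
    have hcont := Wkernel_continuous hs0 hc hp' h1
    exact ⟨hcont, Wkernel_neg hp' hpi', sq_le_Wkernel h1,
      dbl_segM_le hcont.measurable hp' hpi' (by simp [h2])⟩
  refine ⟨fun ω hω α hα => ?_, √(segBound s).toReal + 1, by positivity,
    fun ω hω α hα ρ hρ h0 => ?_⟩
  · obtain ⟨hc, hneg, hsq, hseg⟩ := hfacts ω hω α hα
    obtain ⟨ρ, hρ⟩ := exists_minimizer_dbl hc hneg hsq segM (ne_top_of_le_ne_top hC hseg)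
    exact ⟨ρ, energy_minimizer_iff.mpr hρ⟩
  · obtain ⟨hc, hneg, hsq, hseg⟩ := hfacts ω hω α hα
    rw [energy_minimizer_iff] at hρ
    have := hρ.1
    have hIle := (hρ.2 segM inferInstance).trans hseg
    have hae := potential_le hc.measurable hneg hρ (ne_top_of_le_ne_top hC hIle)
    have hbd : ∀ᵐ x ∂ρ, nrm x ≤ √(segBound s).toReal + 1 := by
      filter_upwards [hae] with x hx
      have h1 : ENNReal.ofReal (nrm x ^ 2) ≤ segBound s :=
        (sq_le_second_moment h0 x).trans
          ((lintegral_mono fun y => hsq (x - y)).trans (hx.trans hIle))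
      have h2 := (ENNReal.ofReal_le_iff_le_toReal hC).mp h1
      have h3 := Real.le_sqrt_of_sq_le h2
      linarith
    intro x hx
    by_contra hxR
    have hopen : IsOpen {y : ℝ × ℝ | √(segBound s).toReal + 1 < nrm y} :=
      isOpen_lt continuous_const nrm_continuous
    have hxR' : √(segBound s).toReal + 1 < nrm x := lt_of_not_ge hxR
    have hpos := hx _ (hopen.mem_nhds hxR')
    have hz : ρ {y : ℝ × ℝ | √(segBound s).toReal + 1 < nrm y} = 0 := by
      rw [ae_iff] at hbd
      simpa using hbd
    exact hpos.ne' hz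

end Aniso
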